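/- There exists γ₀ > 0, depending only on the dimension d, such that for every 0 < γ ≤ γ₀, every finite rectangle Λ ⊂ ℤ^d, every E ∈ ℝ, and every δ with γ^{1/4} < δ ≤ 1, letting N(I) denote the number of eigenvalues of H(u), counted with multiplicity, lying in I = [E − δ/2, E + δ/2], one has 𝔼 N(I) ≤ 6·√δ·|Λ|. -/

import Mathlib

open Matrix MeasureTheory

/-- The uniform probability measure on `[-1,1]`. -/
noncomputable def unif : Measure ℝ :=
  ((2 : NNReal))⁻¹ • (volume.restrict (Set.Icc (-1 : ℝ) 1))

instance : IsProbabilityMeasure unif := by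
  constructor
  rw [unif, Measure.smul_apply, Measure.restrict_apply_univ, Real.volume_Icc]
  norm_num
  rw [ENNReal.smul_def]
  simp [ENNReal.inv_mul_cancel]

/-- The product of uniform measures on `[-1,1]^ι` (i.i.d. uniform random variables). -/
noncomputable def unifPi (ι : Type*) [Fintype ι] : Measure (ι → ℝ) :=
  Measure.pi fun _ => unif

/-- The ℓ¹ distance `|x-y| = Σᵢ |xᵢ-yᵢ|` on `ℤ^d`, as a natural number. -/
def dist1 {d : ℕ} (x y : Fin d → ℤ) : ℕ := ∑ i, (x i - y i).natAbs

/-- The random block Hamiltonian: diagonal 2×2 block `[[u_x,1],[1,-u_x]]` at each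
position `x ∈ Λ`, and block `γ·I₂` between nearest-neighbor positions. -/
noncomputable def Ham (d : ℕ) (γ : ℝ) (Λ : Finset (Fin d → ℤ)) (u : {x // x ∈ Λ} → ℝ) :
    Matrix ({x // x ∈ Λ} × Fin 2) ({x // x ∈ Λ} × Fin 2) ℝ := fun s t =>
  if s.1 = t.1 then
    (if s.2 = t.2 then (if s.2 = 0 then u s.1 else -u s.1) else 1)
  else if dist1 (s.1 : Fin d → ℤ) (t.1 : Fin d → ℤ) = 1 then
    (if s.2 = t.2 then γ else 0)
  else 0

/-- The number of eigenvalues of `H(u)`, counted with multiplicity (i.e. real roots of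
the characteristic polynomial with multiplicity), in `[E - δ/2, E + δ/2]`. -/
noncomputable def eigCount (d : ℕ) (γ : ℝ) (Λ : Finset (Fin d → ℤ))
    (u : {x // x ∈ Λ} → ℝ) (E δ : ℝ) : ℕ :=
  Multiset.card ((Ham d γ Λ u).charpoly.roots.filter
    (fun r => E - δ / 2 ≤ r ∧ r ≤ E + δ / 2))

/-!
The block `h_a = [[a, 1], [1, -a]]` satisfies `h_a² = (1 + a²) I`, so
`‖(h_a - E) p‖ ≥ |√(1 + a²) - |E|| ‖p‖`. The hopping term has norm at most `2dγ ≤ δ/2` by the Schur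
test. A vector in the span of the eigenvectors with eigenvalue in `[E - δ/2, E + δ/2]` is moved by
`H - E` by at most `δ/2` times its norm, hence by at most `δ` times its norm by the block-diagonal
part of `H` minus `E`; so it cannot vanish at every resonant position, one with
`|√(1 + u_x²) - |E|| ≤ δ`, unless it is zero. Therefore `N(I)` is at most twice the number of
resonant positions. Two resonant potentials `a, b` of the same sign in `[-1, 1]` satisfy
`(a - b)² ≤ |a² - b²| ≤ 6δ`, so a position is resonant with probability at most `3√δ`.
-/

lemma sub_sq_le_abs_sq_sub_sq {R : Type*} [CommRing R] [LinearOrder R] [IsStrictOrderedRing R]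
    {a b : R} (hab : 0 ≤ a * b) : (a - b) ^ 2 ≤ |a ^ 2 - b ^ 2| := by
  have habs : |a - b| ≤ |a + b| := sq_le_sq.1 (by linarith [sub_sq a b, add_sq a b])
  calc (a - b) ^ 2 = |a - b| * |a - b| := by rw [← sq, sq_abs]
    _ ≤ |a + b| * |a - b| := by gcongr
    _ = |a ^ 2 - b ^ 2| := by rw [← abs_mul, sq_sub_sq]

lemma mul_le_rpow_of_le_rpow {K γ s : ℝ} (hK : 0 < K) (hγ : 0 < γ) (hs : s < 1)
    (h : γ ≤ K ^ (-(1 - s)⁻¹)) : K * γ ≤ γ ^ s := by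
  have hs' : 0 < 1 - s := sub_pos.2 hs
  have hpow : γ ^ (1 - s) ≤ K⁻¹ := by
    calc γ ^ (1 - s) ≤ (K ^ (-(1 - s)⁻¹)) ^ (1 - s) := by gcongr
      _ = K⁻¹ := by
        rw [← Real.rpow_mul hK.le, neg_mul, inv_mul_cancel₀ hs'.ne', Real.rpow_neg_one]
  calc K * γ = K * (γ ^ (1 - s) * γ ^ s) := by rw [← Real.rpow_add hγ]; simp
    _ ≤ K * (K⁻¹ * γ ^ s) := by gcongr
    _ = γ ^ s := mul_inv_cancel_left₀ hK.ne' _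

section EigenvalueCounting

variable {𝕜 : Type*} [RCLike 𝕜]

lemma norm_sq_sum_smul_of_orthonormal {E ι : Type*} [NormedAddCommGroup E]
    [InnerProductSpace 𝕜 E] [Fintype ι] {b : ι → E} (hb : Orthonormal 𝕜 b) (a : ι → 𝕜) :
    ‖∑ i, a i • b i‖ ^ 2 = ∑ i, ‖a i‖ ^ 2 := by
  rw [@norm_sq_eq_re_inner 𝕜, hb.inner_sum, map_sum]
  simp only [RCLike.conj_mul]
  norm_cast

lemma norm_apply_sub_smul_le_of_mem_span {E ι : Type*} [NormedAddCommGroup E]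
    [InnerProductSpace 𝕜 E] [Finite ι] {T : E →ₗ[𝕜] E} {b : ι → E} (hb : Orthonormal 𝕜 b)
    {μ : ι → 𝕜} (hT : ∀ i, T (b i) = μ i • b i) {c : 𝕜} {r : ℝ} (hμ : ∀ i, ‖μ i - c‖ ≤ r)
    {v : E} (hv : v ∈ Submodule.span 𝕜 (Set.range b)) : ‖T v - c • v‖ ≤ r * ‖v‖ := by
  have := Fintype.ofFinite ι
  obtain ⟨a, rfl⟩ := (Submodule.mem_span_range_iff_exists_fun 𝕜).1 hv
  rcases isEmpty_or_nonempty ι with _ | ⟨⟨i₀⟩⟩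
  · simp
  have hr : 0 ≤ r := (norm_nonneg _).trans (hμ i₀)
  have expand : T (∑ i, a i • b i) - c • ∑ i, a i • b i = ∑ i, ((μ i - c) * a i) • b i := by
    simp only [map_sum, map_smul, hT, Finset.smul_sum, ← Finset.sum_sub_distrib, smul_smul,
      ← sub_smul]
    exact Finset.sum_congr rfl fun i _ => by ring_nf
  rw [← sq_le_sq₀ (norm_nonneg _) (by positivity), mul_pow, expand,
    norm_sq_sum_smul_of_orthonormal hb, norm_sq_sum_smul_of_orthonormal hb, Finset.mul_sum]
  gcongr with i
  rw [norm_mul, mul_pow]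
  gcongr
  exact hμ i

lemma card_le_finrank_of_eigenvectors {E F ι : Type*} [NormedAddCommGroup E]
    [InnerProductSpace 𝕜 E] [AddCommGroup F] [Module 𝕜 F] [FiniteDimensional 𝕜 F] [Fintype ι]
    {T : E →ₗ[𝕜] E} {b : ι → E} (hb : Orthonormal 𝕜 b) {μ : ι → 𝕜}
    (hT : ∀ i, T (b i) = μ i • b i) {c : 𝕜} {r : ℝ} (hμ : ∀ i, ‖μ i - c‖ ≤ r) (L : E →ₗ[𝕜] F)
    (hL : ∀ v, L v = 0 → ‖T v - c • v‖ ≤ r * ‖v‖ → v = 0) :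
    Fintype.card ι ≤ Module.finrank 𝕜 F :=
  (hb.linearIndependent.map (Submodule.disjoint_def.2 fun v hv hLv =>
    hL v hLv (norm_apply_sub_smul_le_of_mem_span hb hT hμ hv))).fintype_card_le_finrank

lemma card_filter_roots_charpoly_le_finrank {n F : Type*} [Fintype n] [DecidableEq n]
    [AddCommGroup F] [Module 𝕜 F] [FiniteDimensional 𝕜 F] {A : Matrix n n 𝕜} (hA : A.IsHermitian)
    (c : 𝕜) (r : ℝ) (L : EuclideanSpace 𝕜 n →ₗ[𝕜] F)
    (hL : ∀ v, L v = 0 → ‖toEuclideanLin A v - c • v‖ ≤ r * ‖v‖ → v = 0) :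
    (A.charpoly.roots.filter fun z => ‖z - c‖ ≤ r).card ≤ Module.finrank 𝕜 F := by
  have hcard : (A.charpoly.roots.filter fun z => ‖z - c‖ ≤ r).card =
      Fintype.card {i // ‖(hA.eigenvalues i : 𝕜) - c‖ ≤ r} := by
    rw [hA.roots_charpoly_eq_eigenvalues, Multiset.filter_map, Multiset.card_map,
      Fintype.card_subtype]
    rfl
  rw [hcard]
  refine card_le_finrank_of_eigenvectors
    (hA.eigenvectorBasis.orthonormal.comp _ Subtype.val_injective)
    (fun i => ?_) (fun i => i.2) L hL
  ext j
  simpa [RCLike.real_smul_eq_coe_mul] using congrFun (hA.mulVec_eigenvectorBasis i) j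

end EigenvalueCounting

section SchurTest

open scoped Matrix.Norms.L2Operator

lemma l2_opNorm_le_sqrt_mul {𝕜 m n : Type*} [RCLike 𝕜] [Fintype m] [Fintype n] [DecidableEq n]
    {A : Matrix m n 𝕜} {R C : ℝ} (hR : 0 ≤ R) (hrow : ∀ i, ∑ j, ‖A i j‖ ≤ R)
    (hcol : ∀ j, ∑ i, ‖A i j‖ ≤ C) : ‖A‖ ≤ √(R * C) := by
  rw [l2_opNorm_def]
  refine ContinuousLinearMap.opNorm_le_bound _ (Real.sqrt_nonneg _) fun v => ?_
  have hentry (i : m) : ‖toEuclideanLin A v i‖ ^ 2 ≤ R * ∑ j, ‖A i j‖ * ‖v j‖ ^ 2 := by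
    calc ‖toEuclideanLin A v i‖ ^ 2
        ≤ (∑ j, ‖A i j‖ * ‖v j‖) ^ 2 := by
          gcongr
          simpa only [norm_mul, mulVec, dotProduct, ofLp_toLpLin, toLin'_apply] using
            norm_sum_le Finset.univ fun j => A i j * v j
      _ ≤ (∑ j, ‖A i j‖) * ∑ j, ‖A i j‖ * ‖v j‖ ^ 2 :=
          Finset.sum_sq_le_sum_mul_sum_of_sq_le_mul _ (fun _ _ => by positivity)
            (fun _ _ => by positivity) fun _ _ => by linarith
      _ ≤ R * ∑ j, ‖A i j‖ * ‖v j‖ ^ 2 := by gcongr; exact hrow i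
  have hsq : ‖toEuclideanLin A v‖ ^ 2 ≤ R * C * ‖v‖ ^ 2 := by
    calc ‖toEuclideanLin A v‖ ^ 2
        ≤ ∑ i, R * ∑ j, ‖A i j‖ * ‖v j‖ ^ 2 := by
          rw [EuclideanSpace.norm_sq_eq]
          exact Finset.sum_le_sum fun i _ => hentry i
      _ = R * ∑ j, (∑ i, ‖A i j‖) * ‖v j‖ ^ 2 := by
          rw [← Finset.mul_sum, Finset.sum_comm]
          simp only [Finset.sum_mul]
      _ ≤ R * ∑ j, C * ‖v j‖ ^ 2 := by gcongr with j; exact hcol j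
      _ = R * C * ‖v‖ ^ 2 := by rw [← Finset.mul_sum, EuclideanSpace.norm_sq_eq, mul_assoc]
  calc ‖toEuclideanLin A v‖ ≤ √(R * C * ‖v‖ ^ 2) := Real.le_sqrt_of_sq_le hsq
    _ = √(R * C) * ‖v‖ := by rw [Real.sqrt_mul' _ (by positivity), Real.sqrt_sq (norm_nonneg v)]

lemma l2_opNorm_adjMatrix_le {V : Type*} [Fintype V] [DecidableEq V] (G : SimpleGraph V)
    [DecidableRel G.Adj] {D : ℕ} (hD : ∀ x, G.degree x ≤ D) : ‖G.adjMatrix ℝ‖ ≤ D := by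
  have hrow (x : V) : ∑ y, ‖G.adjMatrix ℝ x y‖ ≤ D := by
    simpa [SimpleGraph.adjMatrix_apply, apply_ite, Finset.sum_boole,
      ← SimpleGraph.card_neighborFinset_eq_degree, SimpleGraph.neighborFinset_eq_filter] using hD x
  have hcol (y : V) : ∑ x, ‖G.adjMatrix ℝ x y‖ ≤ D := by
    simpa only [G.isSymm_adjMatrix.apply y] using hrow y
  calc ‖G.adjMatrix ℝ‖ ≤ √(D * D) := l2_opNorm_le_sqrt_mul D.cast_nonneg hrow hcol
    _ = D := Real.sqrt_mul_self D.cast_nonneg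

end SchurTest

section SiteDiagonal

open scoped Matrix.Norms.L2Operator

variable {𝕜 ι κ : Type*}

/-- The block-diagonal matrix with block `M x` at the position `x`. Unlike
`Matrix.blockDiagonal`, it has the position as the first component of its indices. -/
def siteDiagonal [Zero 𝕜] [DecidableEq ι] (M : ι → Matrix κ κ 𝕜) : Matrix (ι × κ) (ι × κ) 𝕜 :=
  (blockDiagonal M).submatrix Prod.swap Prod.swap

lemma isHermitian_siteDiagonal [AddMonoid 𝕜] [StarAddMonoid 𝕜] [DecidableEq ι]
    {M : ι → Matrix κ κ 𝕜} (hM : ∀ x, (M x).IsHermitian) : (siteDiagonal M).IsHermitian := by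
  refine IsHermitian.submatrix ?_ _
  rw [IsHermitian, blockDiagonal_conjTranspose]
  exact congrArg _ (funext hM)

variable [RCLike 𝕜]

/-- The component at the position `x` of a vector indexed by pairs. -/
def fiber (x : ι) : EuclideanSpace 𝕜 (ι × κ) →ₗ[𝕜] EuclideanSpace 𝕜 κ where
  toFun v := WithLp.toLp 2 fun k => v (x, k)
  map_add' _ _ := rfl
  map_smul' _ _ := rfl

lemma eq_zero_of_fiber_eq_zero {v : EuclideanSpace 𝕜 (ι × κ)} (h : ∀ x, fiber x v = 0) :
    v = 0 := by
  ext ⟨x, k⟩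
  exact congrArg (· k) (h x)

lemma fiber_siteDiagonal [Fintype ι] [DecidableEq ι] [Fintype κ] [DecidableEq κ]
    (M : ι → Matrix κ κ 𝕜) (v : EuclideanSpace 𝕜 (ι × κ)) (x : ι) :
    fiber x (toEuclideanLin (siteDiagonal M) v) = toEuclideanLin (M x) (fiber x v) := by
  ext k
  change (siteDiagonal M *ᵥ v) (x, k) = (M x *ᵥ fun l => v (x, l)) k
  simp [siteDiagonal, mulVec, dotProduct, Fintype.sum_prod_type, blockDiagonal_apply]

variable [Fintype ι] [Fintype κ]

lemma norm_sq_eq_sum_fiber (v : EuclideanSpace 𝕜 (ι × κ)) : ‖v‖ ^ 2 = ∑ x, ‖fiber x v‖ ^ 2 := by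
  simp only [EuclideanSpace.norm_sq_eq, Fintype.sum_prod_type]
  rfl

lemma eq_zero_of_norm_le_of_fiber_lt {v w : EuclideanSpace 𝕜 (ι × κ)} {ρ : ℝ}
    (hfiber : ∀ x, fiber x v ≠ 0 → ρ * ‖fiber x v‖ < ‖fiber x w‖) (hle : ‖w‖ ≤ ρ * ‖v‖) :
    v = 0 := by
  by_contra hv
  have hρ : 0 ≤ ρ := nonneg_of_mul_nonneg_left ((norm_nonneg w).trans hle) (norm_pos_iff.2 hv)
  obtain ⟨x₀, hx₀⟩ : ∃ x, fiber x v ≠ 0 := by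
    by_contra! h
    exact hv (eq_zero_of_fiber_eq_zero h)
  have hlt : ∑ x, (ρ * ‖fiber x v‖) ^ 2 < ∑ x, ‖fiber x w‖ ^ 2 := by
    refine Finset.sum_lt_sum (fun x _ => ?_) ⟨x₀, Finset.mem_univ _, ?_⟩
    · by_cases hx : fiber x v = 0
      · simp [hx]
      · gcongr
        exact (hfiber x hx).le
    · gcongr
      exact hfiber x₀ hx₀
  simp only [mul_pow, ← Finset.mul_sum, ← norm_sq_eq_sum_fiber] at hlt
  rw [← mul_pow, sq_lt_sq₀ (by positivity) (norm_nonneg w)] at hlt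
  exact hlt.not_ge hle

lemma card_filter_roots_charpoly_siteDiagonal_add_le [DecidableEq ι] [DecidableEq κ]
    {M : ι → Matrix κ κ 𝕜} {P : Matrix (ι × κ) (ι × κ) 𝕜} (hMP : (siteDiagonal M + P).IsHermitian)
    {c : 𝕜} {r ρ : ℝ} (hρ : r + ‖P‖ ≤ ρ) (B : Finset ι)
    (hB : ∀ x ∉ B, ∀ p ≠ 0, ρ * ‖p‖ < ‖toEuclideanLin (M x) p - c • p‖) :
    ((siteDiagonal M + P).charpoly.roots.filter fun z => ‖z - c‖ ≤ r).card ≤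
      B.card * Fintype.card κ := by
  let restrict : EuclideanSpace 𝕜 (ι × κ) →ₗ[𝕜] B → EuclideanSpace 𝕜 κ :=
    LinearMap.pi fun x => fiber x.1
  have hrank : Module.finrank 𝕜 (B → EuclideanSpace 𝕜 κ) = B.card * Fintype.card κ := by
    simp [Module.finrank_pi_fintype]
  rw [← hrank]
  refine card_filter_roots_charpoly_le_finrank hMP c r restrict fun v hv hle => ?_
  refine eq_zero_of_norm_le_of_fiber_lt (ρ := ρ)
    (w := toEuclideanLin (siteDiagonal M) v - c • v) (fun x hx => ?_) ?_
  · rw [map_sub, map_smul, fiber_siteDiagonal]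
    exact hB x (fun hxB => hx (congrFun hv ⟨x, hxB⟩)) _ hx
  · calc ‖toEuclideanLin (siteDiagonal M) v - c • v‖
        = ‖(toEuclideanLin (siteDiagonal M + P) v - c • v) - toEuclideanLin P v‖ := by
          rw [map_add, LinearMap.add_apply]; congr 1; abel
      _ ≤ r * ‖v‖ + ‖P‖ * ‖v‖ := (norm_sub_le _ _).trans (add_le_add hle (l2_opNorm_mulVec P v))
      _ ≤ ρ * ‖v‖ := by rw [← add_mul]; gcongr

end SiteDiagonal

section Expectation

lemma ncard_setOf_mem_eq_sum_indicator {α ι : Type*} [Fintype ι] (x : ι → α) (S : Set α) :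
    ({i | x i ∈ S}.ncard : ℝ) = ∑ i, S.indicator 1 (x i) := by
  classical
  simp [Set.ncard_eq_toFinset_card', Set.indicator_apply]

variable {Ω α ι : Type*} [MeasurableSpace Ω] [MeasurableSpace α] {μ : Measure Ω}
  {ν : Measure α} {X : ι → Ω → α} {S : Set α}

lemma integrable_indicator_comp [IsFiniteMeasure ν] {f : Ω → α} (hf : MeasurePreserving f μ ν)
    (hS : MeasurableSet S) : Integrable (fun ω => S.indicator (1 : α → ℝ) (f ω)) μ :=
  hf.integrable_comp_of_integrable ((integrable_const 1).indicator hS)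

lemma integrable_ncard_setOf_mem [Finite ι] [IsFiniteMeasure ν]
    (hX : ∀ i, MeasurePreserving (X i) μ ν) (hS : MeasurableSet S) :
    Integrable (fun ω => ({i | X i ω ∈ S}.ncard : ℝ)) μ := by
  have := Fintype.ofFinite ι
  simp only [ncard_setOf_mem_eq_sum_indicator fun i => X i _]
  exact integrable_finsetSum _ fun i _ => integrable_indicator_comp (hX i) hS

lemma integral_ncard_setOf_mem [Fintype ι] [IsFiniteMeasure ν]
    (hX : ∀ i, MeasurePreserving (X i) μ ν) (hS : MeasurableSet S) :
    ∫ ω, ({i | X i ω ∈ S}.ncard : ℝ) ∂μ = Fintype.card ι * ν.real S := by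
  have hprob (i : ι) : ∫ ω, S.indicator (1 : α → ℝ) (X i ω) ∂μ = ν.real S := by
    rw [← integral_indicator_one hS, ← (hX i).map_eq, integral_map (hX i).aemeasurable]
    exact (measurable_one.indicator hS).aestronglyMeasurable
  simp only [ncard_setOf_mem_eq_sum_indicator fun i => X i _]
  rw [integral_finsetSum _ fun i _ => integrable_indicator_comp (hX i) hS]
  simp [hprob]

end Expectation

section LocalBlock

/-- The single-site Hamiltonian with potential `a`. -/
def localBlock (a : ℝ) : Matrix (Fin 2) (Fin 2) ℝ := !![a, 1; 1, -a]

lemma isHermitian_localBlock (a : ℝ) : (localBlock a).IsHermitian := by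
  ext i j
  fin_cases i <;> fin_cases j <;> simp [localBlock]

lemma norm_localBlock_apply (a : ℝ) (p : EuclideanSpace ℝ (Fin 2)) :
    ‖toEuclideanLin (localBlock a) p‖ = √(1 + a ^ 2) * ‖p‖ := by
  rw [← sq_eq_sq₀ (norm_nonneg _) (by positivity), mul_pow, Real.sq_sqrt (by positivity)]
  simp only [EuclideanSpace.real_norm_sq_eq, Fin.sum_univ_two, localBlock, ofLp_toLpLin,
    toLin'_apply, mulVec, dotProduct, of_apply, cons_val_zero, cons_val_one]
  ring

lemma abs_sub_mul_norm_le_norm_localBlock_sub (a E : ℝ) (p : EuclideanSpace ℝ (Fin 2)) :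
    |√(1 + a ^ 2) - abs E| * ‖p‖ ≤ ‖toEuclideanLin (localBlock a) p - E • p‖ := by
  calc |√(1 + a ^ 2) - abs E| * ‖p‖
      = |‖toEuclideanLin (localBlock a) p‖ - ‖E • p‖| := by
        rw [norm_localBlock_apply, norm_smul, Real.norm_eq_abs, ← sub_mul, abs_mul, abs_norm]
    _ ≤ _ := abs_norm_sub_norm_le _ _

/-- The potentials for which the positive eigenvalue `√(1 + a²)` of the single-site Hamiltonian
lies within `ρ` of `e`. -/
def resonantSet (e ρ : ℝ) : Set ℝ := {a | |√(1 + a ^ 2) - e| ≤ ρ}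

lemma measurableSet_resonantSet (e ρ : ℝ) : MeasurableSet (resonantSet e ρ) :=
  measurableSet_le (by fun_prop) (by fun_prop)

lemma abs_sq_sub_sq_le_of_mem_resonantSet {e ρ a b : ℝ} (ha : a ∈ resonantSet e ρ)
    (hb : b ∈ resonantSet e ρ) (ha1 : |a| ≤ 1) (hb1 : |b| ≤ 1) : |a ^ 2 - b ^ 2| ≤ 6 * ρ := by
  have hsqrt_le {x : ℝ} (hx : |x| ≤ 1) : √(1 + x ^ 2) ≤ 3 / 2 := by
    rw [Real.sqrt_le_left (by norm_num)]
    linarith [(sq_le_one_iff_abs_le_one x).2 hx]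
  have hdiff : |√(1 + a ^ 2) - √(1 + b ^ 2)| ≤ 2 * ρ := by
    linarith [abs_sub_le (√(1 + a ^ 2)) e √(1 + b ^ 2), abs_sub_comm e √(1 + b ^ 2),
      ha.out, hb.out]
  have hsum : |√(1 + a ^ 2) + √(1 + b ^ 2)| ≤ 3 := by
    rw [abs_of_nonneg (by positivity)]
    linarith [hsqrt_le ha1, hsqrt_le hb1]
  have hfactor : a ^ 2 - b ^ 2 =
      (√(1 + a ^ 2) - √(1 + b ^ 2)) * (√(1 + a ^ 2) + √(1 + b ^ 2)) := by
    rw [mul_comm, ← sq_sub_sq, Real.sq_sqrt (by positivity), Real.sq_sqrt (by positivity)]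
    ring
  have hρ : 0 ≤ ρ := (abs_nonneg _).trans ha
  calc |a ^ 2 - b ^ 2| ≤ 2 * ρ * 3 := by rw [hfactor, abs_mul]; gcongr
    _ = 6 * ρ := by ring

lemma volume_le_of_subset_resonantSet {e ρ : ℝ} {T : Set ℝ} (hT : T ⊆ resonantSet e ρ)
    (hT1 : ∀ a ∈ T, |a| ≤ 1) (hsign : ∀ a ∈ T, ∀ b ∈ T, 0 ≤ a * b) :
    volume T ≤ ENNReal.ofReal (3 * √ρ) := by
  refine (Real.volume_le_diam T).trans (Metric.ediam_le fun a ha b hb => ?_)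
  rw [edist_dist, Real.dist_eq]
  refine ENNReal.ofReal_le_ofReal ?_
  have hρ : 0 ≤ ρ := (abs_nonneg _).trans (hT ha)
  refine abs_le_of_sq_le_sq ?_ (by positivity)
  calc (a - b) ^ 2 ≤ |a ^ 2 - b ^ 2| := sub_sq_le_abs_sq_sub_sq (hsign a ha b hb)
    _ ≤ 6 * ρ := abs_sq_sub_sq_le_of_mem_resonantSet (hT ha) (hT hb) (hT1 a ha) (hT1 b hb)
    _ ≤ (3 * √ρ) ^ 2 := by rw [mul_pow, Real.sq_sqrt hρ]; linarith

lemma volume_resonantSet_inter_Icc_le (e ρ : ℝ) :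
    volume (resonantSet e ρ ∩ Set.Icc (-1) 1) ≤ ENNReal.ofReal (6 * √ρ) := by
  set S := resonantSet e ρ ∩ Set.Icc (-1) 1
  have habs : ∀ a ∈ S, |a| ≤ 1 := fun a ha => abs_le.2 ha.2
  have hsplit : S ⊆ S ∩ Set.Iic 0 ∪ S ∩ Set.Ici 0 := by
    rw [← Set.inter_union_distrib_left, Set.Iic_union_Ici, Set.inter_univ]
  calc volume S ≤ volume (S ∩ Set.Iic 0) + volume (S ∩ Set.Ici 0) :=
        (measure_mono hsplit).trans (measure_union_le _ _)
    _ ≤ ENNReal.ofReal (3 * √ρ) + ENNReal.ofReal (3 * √ρ) := by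
        gcongr
        · exact volume_le_of_subset_resonantSet (fun a ha => ha.1.1) (fun a ha => habs a ha.1)
            fun a ha b hb => mul_nonneg_of_nonpos_of_nonpos ha.2 hb.2
        · exact volume_le_of_subset_resonantSet (fun a ha => ha.1.1) (fun a ha => habs a ha.1)
            fun a ha b hb => mul_nonneg ha.2 hb.2
    _ = ENNReal.ofReal (6 * √ρ) := by
        rw [← ENNReal.ofReal_add (by positivity) (by positivity)]
        ring_nf

lemma unif_real_resonantSet_le (e ρ : ℝ) : unif.real (resonantSet e ρ) ≤ 3 * √ρ := by
  have hunif : unif.real (resonantSet e ρ) =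
      2⁻¹ * volume.real (resonantSet e ρ ∩ Set.Icc (-1) 1) := by
    rw [unif, measureReal_nnreal_smul_apply, measureReal_restrict_apply' measurableSet_Icc]
    rfl
  rw [hunif]
  have hvol : volume.real (resonantSet e ρ ∩ Set.Icc (-1) 1) ≤ 6 * √ρ :=
    ENNReal.toReal_le_of_le_ofReal (by positivity) (volume_resonantSet_inter_Icc_le e ρ)
  linarith

open scoped Matrix.Norms.L2Operator in
lemma card_filter_roots_charpoly_localBlock_add_le {ι : Type*} [Fintype ι] [DecidableEq ι]
    (u : ι → ℝ) {P : Matrix (ι × Fin 2) (ι × Fin 2) ℝ} (hP : P.IsHermitian) (E : ℝ) {r ρ : ℝ}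
    (hρ : r + ‖P‖ ≤ ρ) :
    ((siteDiagonal (fun x => localBlock (u x)) + P).charpoly.roots.filter
      fun z => ‖z - E‖ ≤ r).card ≤ {x | u x ∈ resonantSet |E| ρ}.ncard * 2 := by
  classical
  rw [Set.ncard_eq_toFinset_card']
  refine card_filter_roots_charpoly_siteDiagonal_add_le
    ((isHermitian_siteDiagonal fun x => isHermitian_localBlock (u x)).add hP) hρ _
    fun x hx p hp => ?_
  have hfar : ρ < |√(1 + u x ^ 2) - abs E| :=
    not_le.1 fun hle => hx (Set.mem_toFinset.2 hle)
  calc ρ * ‖p‖ < |√(1 + u x ^ 2) - abs E| * ‖p‖ := by gcongr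
    _ ≤ ‖toEuclideanLin (localBlock (u x)) p - E • p‖ :=
      abs_sub_mul_norm_le_norm_localBlock_sub (u x) E p

end LocalBlock

section Hopping

variable {d : ℕ}

lemma dist1_comm (x y : Fin d → ℤ) : dist1 x y = dist1 y x :=
  Finset.sum_congr rfl fun _ _ => by rw [← Int.natAbs_neg, neg_sub]

lemma dist1_self (x : Fin d → ℤ) : dist1 x x = 0 := by
  simp [dist1]

lemma exists_eq_add_single_of_dist1_eq_one {x y : Fin d → ℤ} (h : dist1 x y = 1) :
    ∃ i, ∃ e ∈ ({1, -1} : Finset ℤ), y = x + Pi.single i e := by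
  obtain ⟨i, -, hi⟩ : ∃ i ∈ Finset.univ, (x i - y i).natAbs ≠ 0 :=
    Finset.exists_ne_zero_of_sum_ne_zero (by rw [← dist1, h]; exact one_ne_zero)
  rw [dist1, Fintype.sum_eq_add_sum_compl i] at h
  have hrest : ∀ j ≠ i, x j = y j := by
    have hzero : ∑ j ∈ {i}ᶜ, (x j - y j).natAbs = 0 := by lia
    intro j hj
    have := Finset.sum_eq_zero_iff.1 hzero j (by simpa using hj)
    lia
  refine ⟨i, y i - x i, by simp only [Finset.mem_insert, Finset.mem_singleton]; lia, ?_⟩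
  ext j
  by_cases hj : j = i
  · subst hj
    simp
  · simp [hj, hrest j hj]

lemma card_filter_dist1_eq_one_le (S : Finset (Fin d → ℤ)) (x : Fin d → ℤ) :
    (S.filter fun y => dist1 x y = 1).card ≤ 2 * d := by
  have hsub : (S.filter fun y => dist1 x y = 1) ⊆
      (Finset.univ ×ˢ {1, -1}).image fun p : Fin d × ℤ => x + Pi.single p.1 p.2 := by
    intro y hy
    obtain ⟨i, e, he, rfl⟩ := exists_eq_add_single_of_dist1_eq_one (Finset.mem_filter.1 hy).2
    exact Finset.mem_image.2 ⟨(i, e), by simpa using he, rfl⟩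
  refine (Finset.card_le_card hsub).trans (Finset.card_image_le.trans ?_)
  simp [mul_comm]

/-- The graph on sites whose edges are the off-diagonal entries of the Hamiltonian: it joins
nearest-neighbor positions carrying the same spin component. -/
def hoppingGraph (Λ : Finset (Fin d → ℤ)) : SimpleGraph ({x // x ∈ Λ} × Fin 2) where
  Adj s t := dist1 s.1.1 t.1.1 = 1 ∧ s.2 = t.2
  symm := ⟨fun s t h => ⟨by rw [dist1_comm, h.1], h.2.symm⟩⟩
  loopless := ⟨fun s h => by simp [dist1_self] at h⟩

instance (Λ : Finset (Fin d → ℤ)) : DecidableRel (hoppingGraph Λ).Adj :=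
  fun _ _ => inferInstanceAs (Decidable (_ ∧ _))

lemma hoppingGraph_adj {Λ : Finset (Fin d → ℤ)} {s t : {x // x ∈ Λ} × Fin 2} :
    (hoppingGraph Λ).Adj s t ↔ dist1 s.1.1 t.1.1 = 1 ∧ s.2 = t.2 :=
  Iff.rfl

lemma degree_hoppingGraph_le (Λ : Finset (Fin d → ℤ)) (s : {x // x ∈ Λ} × Fin 2) :
    (hoppingGraph Λ).degree s ≤ 2 * d := by
  refine le_trans (Finset.card_le_card_of_injOn (fun t => t.1.1) (fun t ht => ?_) ?_)
    (card_filter_dist1_eq_one_le Λ s.1)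
  · have hadj := ((hoppingGraph Λ).mem_neighborFinset s t).1 ht
    exact Finset.mem_filter.2 ⟨t.1.2, hadj.1⟩
  · intro t ht t' ht' heq
    have hadj := ((hoppingGraph Λ).mem_neighborFinset s t).1 ht
    have hadj' := ((hoppingGraph Λ).mem_neighborFinset s t').1 ht'
    exact Prod.ext (Subtype.ext heq) (hadj.2.symm.trans hadj'.2)

lemma Ham_eq_siteDiagonal_add (γ : ℝ) (Λ : Finset (Fin d → ℤ)) (u : {x // x ∈ Λ} → ℝ) :
    Ham d γ Λ u =
      siteDiagonal (fun x => localBlock (u x)) + γ • (hoppingGraph Λ).adjMatrix ℝ := by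
  ext ⟨x, i⟩ ⟨y, j⟩
  by_cases hxy : x = y
  · subst hxy
    fin_cases i <;> fin_cases j <;>
      simp [Ham, siteDiagonal, localBlock, blockDiagonal_apply, hoppingGraph_adj, dist1_self]
  · simp [Ham, siteDiagonal, hoppingGraph_adj, SimpleGraph.adjMatrix_apply, hxy,
      blockDiagonal_apply, ← ite_and]

lemma eigCount_le_ncard_mul_two {γ δ : ℝ} (hγδ : 4 * d * |γ| ≤ δ) (Λ : Finset (Fin d → ℤ))
    (u : {x // x ∈ Λ} → ℝ) (E : ℝ) :
    eigCount d γ Λ u E δ ≤ {x | u x ∈ resonantSet |E| δ}.ncard * 2 := by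
  open scoped Matrix.Norms.L2Operator in
  have hnorm : ‖γ • (hoppingGraph Λ).adjMatrix ℝ‖ ≤ δ / 2 := by
    calc ‖γ • (hoppingGraph Λ).adjMatrix ℝ‖ ≤ |γ| * (2 * d : ℕ) := by
          rw [norm_smul, Real.norm_eq_abs]
          gcongr
          exact l2_opNorm_adjMatrix_le _ (degree_hoppingGraph_le Λ)
      _ ≤ δ / 2 := by push_cast; linarith
  have hherm : (γ • (hoppingGraph Λ).adjMatrix ℝ).IsHermitian := by
    rw [IsHermitian, conjTranspose_smul, conjTranspose_eq_transpose_of_trivial,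
      SimpleGraph.transpose_adjMatrix, star_trivial]
  have hcount : eigCount d γ Λ u E δ =
      ((Ham d γ Λ u).charpoly.roots.filter fun z => ‖z - E‖ ≤ δ / 2).card := by
    refine congrArg _ (Multiset.filter_congr fun z _ => ?_)
    rw [Real.norm_eq_abs, abs_le]
    constructor <;> rintro ⟨h₁, h₂⟩ <;> constructor <;> linarith
  rw [hcount, Ham_eq_siteDiagonal_add]
  exact card_filter_roots_charpoly_localBlock_add_le u hherm E (by linarith)

end Hopping

theorem density_of_states_macroscopic_general {d : ℕ} {γ δ : ℝ} (hγδ : 4 * d * |γ| ≤ δ)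
    (Λ : Finset (Fin d → ℤ)) {μ : Measure ({x // x ∈ Λ} → ℝ)}
    (hμ : ∀ x, MeasurePreserving (Function.eval x) μ unif) (E : ℝ) :
    ∫ u, (eigCount d γ Λ u E δ : ℝ) ∂μ ≤ 6 * √δ * Λ.card := by
  have hS := measurableSet_resonantSet |E| δ
  calc ∫ u, (eigCount d γ Λ u E δ : ℝ) ∂μ
      ≤ ∫ u, ({x | u x ∈ resonantSet |E| δ}.ncard : ℝ) * 2 ∂μ := by
        refine integral_mono_of_nonneg (.of_forall fun u => Nat.cast_nonneg _)
          ((integrable_ncard_setOf_mem hμ hS).mul_const 2) (.of_forall fun u => ?_)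
        dsimp only
        exact_mod_cast eigCount_le_ncard_mul_two hγδ Λ u E
    _ = Λ.card * unif.real (resonantSet |E| δ) * 2 := by
        rw [integral_mul_const, integral_ncard_setOf_mem hμ hS, Fintype.card_coe]
    _ ≤ Λ.card * (3 * √δ) * 2 := by gcongr; exact unif_real_resonantSet_le _ _
    _ = 6 * √δ * Λ.card := by ring

/-- macroscopic density of states estimate. There is `γ₀ > 0` such that
for all `0 < γ ≤ γ₀`, every `δ` with `γ^{1/4} < δ ≤ 1`, every rectangle `Λ` and
every `E`: `𝔼 N([E-δ/2, E+δ/2]) ≤ 6·√δ·|Λ|`. -/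
theorem density_of_states_macroscopic (d : ℕ) (hd : 1 ≤ d) :
    ∃ γ₀ : ℝ, 0 < γ₀ ∧
      ∀ γ : ℝ, 0 < γ → γ ≤ γ₀ →
      ∀ δ : ℝ, γ ^ ((1 : ℝ) / 4) < δ → δ ≤ 1 →
      ∀ Λ : Finset (Fin d → ℤ), (∃ a b', Λ = Finset.Icc a b') →
      ∀ E : ℝ,
      ∫ u, (eigCount d γ Λ u E δ : ℝ) ∂(unifPi {x // x ∈ Λ}) ≤
        6 * Real.sqrt δ * (Λ.card : ℝ) := by
  -- `γ₀ = (4d)^(-4/3)` is the largest value for which `γ ≤ γ₀` gives `4dγ ≤ γ^(1/4)`.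
  refine ⟨(4 * d) ^ (-(1 - 1 / 4 : ℝ)⁻¹), by positivity, fun γ hγ hγ₀ δ hδ _ Λ _ E => ?_⟩
  refine density_of_states_macroscopic_general ?_ Λ (measurePreserving_eval fun _ => unif) E
  rw [abs_of_pos hγ]
  exact (mul_le_rpow_of_le_rpow (by positivity) hγ (by norm_num) hγ₀).trans hδ.le
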